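/- Assume in addition that H is superlinear, i.e. H(s)/s → ∞ as s → ∞. Then for every xⁿ ∈ Q there exists exactly one x⁺ ∈ Q that is a scheme update of xⁿ; i.e., the fully discrete convex-splitting scheme for the trajectory equation is uniquely solvable in the admissible set Q. (Theorem 4.1.) -/

import Mathlib

open Finset Filter

noncomputable section

/-- Forward difference onto cells: `(D_h l)_{i-1/2} = (l_i - l_{i-1})/h` (use index `i`, `1 ≤ i ≤ M`). -/
def DhOp (h : ℝ) (l : ℕ → ℝ) (i : ℕ) : ℝ := (l i - l (i - 1)) / h

/-- Difference of a cell function back onto nodes: `(d_h φ)_i = (φ_{i+1/2} - φ_{i-1/2})/h`;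
a cell function `φ` is encoded by `φ i = φ_{i-1/2}`. -/
def dhOp (h : ℝ) (φ : ℕ → ℝ) (i : ℕ) : ℝ := (φ (i + 1) - φ i) / h

/-- Central difference `D̃_h` on nodes. -/
def DtOp (M : ℕ) (h : ℝ) (l : ℕ → ℝ) (i : ℕ) : ℝ :=
  if i = 0 then (l 1 - l 0) / h
  else if i = M then (l M - l (M - 1)) / h
  else (l (i + 1) - l (i - 1)) / (2 * h)

/-- Node inner product `⟨l, g⟩_E`. -/
def ipE (M : ℕ) (h : ℝ) (l g : ℕ → ℝ) : ℝ :=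
  h * (l 0 * g 0 / 2 + (∑ i ∈ Finset.Ioo 0 M, l i * g i) + l M * g M / 2)

/-- Cell inner product `⟨φ, ψ⟩_C`. -/
def ipC (M : ℕ) (h : ℝ) (φ ψ : ℕ → ℝ) : ℝ :=
  h * ∑ i ∈ Finset.Icc 1 M, φ i * ψ i

/-- The admissible (ordered) set `Q`. -/
def inQ (M : ℕ) (X0 XM : ℝ) (l : ℕ → ℝ) : Prop :=
  l 0 = X0 ∧ l M = XM ∧ ∀ i, 1 ≤ i → i ≤ M → l (i - 1) < l i

/-- The closure `Q̄` of the admissible set. -/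
def inQbar (M : ℕ) (X0 XM : ℝ) (l : ℕ → ℝ) : Prop :=
  l 0 = X0 ∧ l M = XM ∧ ∀ i, 1 ≤ i → i ≤ M → l (i - 1) ≤ l i

/-- `Ŝ[x]_i = ⟨K(x_i - y), u₀(Y)⟩_E` for a kernel `K` (e.g. `K = W_c'`);
also used as `w[x]_i` when `K = W` itself. -/
def Shat (M : ℕ) (h : ℝ) (K : ℝ → ℝ) (u0 x : ℕ → ℝ) (i : ℕ) : ℝ :=
  ipE M h (fun j => K (x i - x j)) u0

/-- The cell function `G[x]_{i-1/2} = s·H'(s) - H(s)`, `s = u_{0,i-1/2}/(D_h x)_{i-1/2}`. -/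
def Gcell (h : ℝ) (H : ℝ → ℝ) (u0half x : ℕ → ℝ) (i : ℕ) : ℝ :=
  u0half i / DhOp h x i * deriv H (u0half i / DhOp h x i) - H (u0half i / DhOp h x i)

/-- The mobility coefficient `c[x]_i = u_{0,i}² / ((D̃_h x)_i · f(u_{0,i}/(D̃_h x)_i))`. -/
def cCoef (M : ℕ) (h : ℝ) (f : ℝ → ℝ) (u0 x : ℕ → ℝ) (i : ℕ) : ℝ :=
  u0 i ^ 2 / (DtOp M h x i * f (u0 i / DtOp M h x i))

/-- `xp` is a scheme update of `x`: the fully discrete convex-splitting scheme equations. -/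
def SchemeUpdate (M : ℕ) (h τ : ℝ) (H f Vc Ve Wc We : ℝ → ℝ)
    (u0 u0half x xp : ℕ → ℝ) : Prop :=
  ∀ i, 1 ≤ i → i ≤ M - 1 →
    cCoef M h f u0 x i * (xp i - x i) / τ =
      -dhOp h (Gcell h H u0half xp) i - u0 i * deriv Vc (xp i)
        + u0 i * deriv Ve (x i)
        - u0 i * Shat M h (deriv Wc) u0 xp i + u0 i * Shat M h (deriv We) u0 x i

/-- The discrete total energy `E_N`. -/
def EN (M : ℕ) (h : ℝ) (H V W : ℝ → ℝ) (u0 u0half x : ℕ → ℝ) : ℝ :=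
  h * ∑ i ∈ Finset.Icc 1 M, H (u0half i / DhOp h x i) * DhOp h x i
    + ipE M h u0 (fun i => V (x i))
    + 1 / 2 * ipE M h u0 (fun i => Shat M h W u0 x i)

/-- The convex part `E_{N,c}` of the discrete total energy. -/
def ENc (M : ℕ) (h : ℝ) (H Vc Wc : ℝ → ℝ) (u0 u0half x : ℕ → ℝ) : ℝ :=
  h * ∑ i ∈ Finset.Icc 1 M, H (u0half i / DhOp h x i) * DhOp h x i
    + ipE M h u0 (fun i => Vc (x i))
    + 1 / 2 * ipE M h u0 (fun i => Shat M h Wc u0 x i)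

/-- The concave (subtracted convex) part `E_{N,e}` of the discrete total energy. -/
def ENe (M : ℕ) (h : ℝ) (Ve We : ℝ → ℝ) (u0 x : ℕ → ℝ) : ℝ :=
  ipE M h u0 (fun i => Ve (x i)) + 1 / 2 * ipE M h u0 (fun i => Shat M h We u0 x i)

/-- The convex functional `J` whose minimizer over `Q` is the scheme update of `xn`. -/
def Jfun (M : ℕ) (h τ : ℝ) (H f Vc Ve Wc We : ℝ → ℝ)
    (u0 u0half xn z : ℕ → ℝ) : ℝ :=
  1 / (2 * τ) * ipE M h (fun i => cCoef M h f u0 xn i * (z i - xn i)) (fun i => z i - xn i)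
    + h * ∑ i ∈ Finset.Icc 1 M, H (u0half i / DhOp h z i) * DhOp h z i
    + ipE M h u0 (fun i => Vc (z i))
    + 1 / 2 * ipE M h u0 (fun i => Shat M h Wc u0 z i)
    - ipE M h (fun i => u0 i * deriv Ve (xn i)) z
    - ipE M h (fun i => u0 i * Shat M h (deriv We) u0 xn i) z


/-- The pressure `s H'(s) - H(s)` is monotone. -/
lemma aux_pressure_mono (H : ℝ → ℝ)
    (hHconv : ConvexOn ℝ (Set.Ioi 0) H) (hd : ∀ s, 0 < s → HasDerivAt H (deriv H s) s)
    {s t : ℝ} (hs : 0 < s) (hst : s ≤ t) :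
    s * deriv H s - H s ≤ t * deriv H t - H t := by
  rcases hst.eq_or_lt with rfl | hlt
  · exact le_rfl
  have ht : 0 < t := hs.trans hlt
  have h1 := hHconv.slope_le_of_hasDerivAt (Set.mem_Ioi.2 hs) (Set.mem_Ioi.2 ht) hlt (hd t ht)
  have h2 := hHconv.le_slope_of_hasDerivAt (Set.mem_Ioi.2 hs) (Set.mem_Ioi.2 ht) hlt (hd s hs)
  rw [slope_def_field] at h1 h2
  have h3 : deriv H s ≤ deriv H t := h2.trans h1
  rw [div_le_iff₀ (by linarith)] at h1
  nlinarith

lemma aux_deriv_mono (V : ℝ → ℝ) (hV : ConvexOn ℝ Set.univ V) (hr : ContDiff ℝ 1 V) :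
    Monotone (deriv V) := by
  have := hV.monotoneOn_deriv (fun x _ => (hr.differentiable (by norm_num)) x)
  exact fun a b hab => this (Set.mem_univ a) (Set.mem_univ b) hab

lemma aux_le (M : ℕ) (X0 XM : ℝ)
    (h : ℝ) (hh : 0 < h) (τ : ℝ) (hτ : 0 < τ)
    (H f Vc Ve Wc We : ℝ → ℝ)
    (hP : ∀ s t : ℝ, 0 < s → s ≤ t → s * deriv H s - H s ≤ t * deriv H t - H t)
    (hV : Monotone (deriv Vc)) (hW : Monotone (deriv Wc))
    (u0 u0half : ℕ → ℝ)
    (hu0 : ∀ i ≤ M, 0 < u0 i)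
    (hu0half : ∀ i, 1 ≤ i → i ≤ M → 0 < u0half i)
    (xn x y : ℕ → ℝ) (hc : ∀ i, 1 ≤ i → i ≤ M - 1 → 0 < cCoef M h f u0 xn i)
    (hx : inQ M X0 XM x) (hy : inQ M X0 XM y)
    (sx : SchemeUpdate M h τ H f Vc Ve Wc We u0 u0half xn x)
    (sy : SchemeUpdate M h τ H f Vc Ve Wc We u0 u0half xn y) :
    ∀ i ≤ M, x i ≤ y i := by
  obtain ⟨i, hi, hmax⟩ := Finset.exists_max_image (Finset.range (M + 1)) (fun i => x i - y i)
    ⟨0, by simp⟩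
  have hiM : i ≤ M := by simpa [Nat.lt_succ_iff] using hi
  have hmax' : ∀ j ≤ M, x j - y j ≤ x i - y i := fun j hj => hmax j (by simp; omega)
  by_contra! hcon
  obtain ⟨j, hj, hlt⟩ := hcon
  have hpos : 0 < x i - y i := by linarith [hmax' j hj]
  have hi0 : i ≠ 0 := by
    rintro rfl
    rw [hx.1, hy.1] at hpos; linarith
  have hi1 : i ≠ M := by
    rintro rfl
    rw [hx.2.1, hy.2.1] at hpos; linarith
  have ex := sx i (by omega) (by omega)
  have ey := sy i (by omega) (by omega)
  have hG : ∀ k (a b : ℕ → ℝ), 1 ≤ k → k ≤ M → inQ M X0 XM a → inQ M X0 XM b →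
      b k - b (k - 1) ≤ a k - a (k - 1) → Gcell h H u0half a k ≤ Gcell h H u0half b k := by
    intro k a b hk1 hkM ha hb hab
    have hda := ha.2.2 k hk1 hkM
    have hdb := hb.2.2 k hk1 hkM
    have hu := hu0half k hk1 hkM
    have h1 : 0 < DhOp h b k := div_pos (by linarith) hh
    have h2 : DhOp h b k ≤ DhOp h a k := by unfold DhOp; gcongr
    unfold Gcell
    apply hP
    · exact div_pos hu (h1.trans_le h2)
    · gcongr
  have g1 := hG i x y (by omega) hiM hx hy (by linarith [hmax' (i - 1) (by omega)])
  have g2 := hG (i + 1) y x (by omega) (by omega) hy hx (by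
    have := hmax' (i + 1) (by omega)
    simp only [Nat.add_sub_cancel]; linarith)
  have hu := hu0 i hiM
  have hdh : dhOp h (Gcell h H u0half y) i ≤ dhOp h (Gcell h H u0half x) i := by
    unfold dhOp; gcongr
  have hVi : u0 i * deriv Vc (y i) ≤ u0 i * deriv Vc (x i) :=
    mul_le_mul_of_nonneg_left (hV (by linarith)) hu.le
  have hWj : ∀ j ≤ M, deriv Wc (y i - y j) * u0 j ≤ deriv Wc (x i - x j) * u0 j := fun j hj =>
    mul_le_mul_of_nonneg_right (hW (by linarith [hmax' j hj])) (hu0 j hj).le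
  have hS : Shat M h (deriv Wc) u0 y i ≤ Shat M h (deriv Wc) u0 x i := by
    unfold Shat ipE
    apply mul_le_mul_of_nonneg_left _ hh.le
    have a1 := hWj 0 (by omega)
    have a2 := hWj M le_rfl
    have a3 : ∑ j ∈ Finset.Ioo 0 M, deriv Wc (y i - y j) * u0 j
        ≤ ∑ j ∈ Finset.Ioo 0 M, deriv Wc (x i - x j) * u0 j :=
      Finset.sum_le_sum fun j hj => hWj j (by simp at hj; omega)
    linarith
  have hS' := mul_le_mul_of_nonneg_left hS hu.le
  have hL : cCoef M h f u0 xn i * (y i - xn i) / τ < cCoef M h f u0 xn i * (x i - xn i) / τ := by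
    have := hc i (by omega) (by omega)
    have hlt : y i - xn i < x i - xn i := by linarith
    gcongr
  linarith

lemma aux_cCoef_pos (M : ℕ) (X0 XM h : ℝ) (hh : 0 < h) (f : ℝ → ℝ)
    (hf : ∀ s : ℝ, 0 < s → 0 < f s) (u0 xn : ℕ → ℝ) (hu0 : ∀ i ≤ M, 0 < u0 i)
    (hxn : inQ M X0 XM xn) : ∀ i, 1 ≤ i → i ≤ M - 1 → 0 < cCoef M h f u0 xn i := by
  intro i h1 h2
  have hu := hu0 i (by omega)
  have a := hxn.2.2 i h1 (by omega)
  have b := hxn.2.2 (i + 1) (by omega) (by omega)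
  simp only [Nat.add_sub_cancel] at b
  have hD : 0 < DtOp M h xn i := by
    unfold DtOp
    rw [if_neg (by omega), if_neg (by omega)]
    exact div_pos (by linarith) (by linarith)
  exact div_pos (by positivity) (mul_pos hD (hf _ (div_pos hu hD)))

lemma aux_inQ_mono {M : ℕ} {X0 XM : ℝ} {z : ℕ → ℝ} (hz : inQ M X0 XM z) {i j : ℕ}
    (hij : i ≤ j) (hj : j ≤ M) : z i ≤ z j := by
  induction j, hij using Nat.le_induction with
  | base => exact le_rfl
  | succ n hn ih =>
    have := hz.2.2 (n + 1) (by omega) hj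
    simp only [Nat.add_sub_cancel] at this
    exact (ih (by omega)).trans this.le

/-- A function blowing up at `0+` and continuous on `(0,∞)` is bounded below on `(0,L]`. -/
lemma aux_bdd (Φ : ℝ → ℝ) (hc : ContinuousOn Φ (Set.Ioi 0))
    (hlim : Tendsto Φ (nhdsWithin 0 (Set.Ioi 0)) atTop) (L : ℝ) :
    ∃ p : ℝ, 0 ≤ p ∧ ∀ d, 0 < d → d ≤ L → -p ≤ Φ d := by
  have h1 := hlim.eventually_ge_atTop 0
  rw [eventually_nhdsWithin_iff, Metric.eventually_nhds_iff] at h1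
  obtain ⟨ε, hε, h1⟩ := h1
  have hK : IsCompact (Set.Icc ε L) := isCompact_Icc
  have hcK : ContinuousOn Φ (Set.Icc ε L) := hc.mono fun d hd => lt_of_lt_of_le hε hd.1
  obtain ⟨c, hcb⟩ := hK.bddBelow_image hcK
  refine ⟨|c|, abs_nonneg c, fun d hd hdL => ?_⟩
  by_cases hdε : d < ε
  · have := h1 (y := d) (by rw [Real.dist_eq, sub_zero, abs_of_pos hd]; exact hdε) hd
    linarith [abs_nonneg c]
  · have := hcb (Set.mem_image_of_mem Φ (show d ∈ Set.Icc ε L from ⟨not_lt.1 hdε, hdL⟩))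
    linarith [neg_abs_le c]

/-- Existence of a minimizer over the admissible set. -/
lemma aux_min (M : ℕ) (X0 XM : ℝ) (R : (ℕ → ℝ) → ℝ) (hR : Continuous R)
    (Φ : ℕ → ℝ → ℝ)
    (hc : ∀ k ∈ Finset.Icc 1 M, ContinuousOn (Φ k) (Set.Ioi 0))
    (hlim : ∀ k ∈ Finset.Icc 1 M, Tendsto (Φ k) (nhdsWithin 0 (Set.Ioi 0)) atTop)
    (x : ℕ → ℝ) (hx : inQ M X0 XM x) (hxt : ∀ j, M ≤ j → x j = XM) :
    ∃ z : ℕ → ℝ, inQ M X0 XM z ∧ (∀ j, M ≤ j → z j = XM) ∧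
      ∀ y : ℕ → ℝ, inQ M X0 XM y → (∀ j, M ≤ j → y j = XM) →
        R z + ∑ k ∈ Finset.Icc 1 M, Φ k (z k - z (k - 1)) ≤
        R y + ∑ k ∈ Finset.Icc 1 M, Φ k (y k - y (k - 1)) := by
  set J : (ℕ → ℝ) → ℝ := fun y => R y + ∑ k ∈ Finset.Icc 1 M, Φ k (y k - y (k - 1)) with hJ
  set B : Set (ℕ → ℝ) := Set.univ.pi (fun _ => Set.Icc X0 XM) with hB
  have hBc : IsCompact B := isCompact_univ_pi fun _ => isCompact_Icc
  obtain ⟨r, hr⟩ := hBc.bddBelow_image hR.continuousOn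
  have hQB : ∀ y, inQ M X0 XM y → (∀ j, M ≤ j → y j = XM) → y ∈ B := by
    intro y hy hyt j _
    have h0M : X0 ≤ XM := by
      have := aux_inQ_mono hy (Nat.zero_le M) le_rfl
      rwa [hy.1, hy.2.1] at this
    rcases le_total j M with hj | hj
    · have a := aux_inQ_mono hy (Nat.zero_le j) hj
      have b := aux_inQ_mono hy hj le_rfl
      rw [hy.1] at a; rw [hy.2.1] at b
      exact ⟨a, b⟩
    · rw [hyt j hj]; exact ⟨h0M, le_rfl⟩
  have hp : ∀ k, ∃ p : ℝ, 0 ≤ p ∧ (k ∈ Finset.Icc 1 M → ∀ d, 0 < d → d ≤ XM - X0 → -p ≤ Φ k d) := by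
    intro k
    by_cases hk : k ∈ Finset.Icc 1 M
    · obtain ⟨p, h0, h1⟩ := aux_bdd (Φ k) (hc k hk) (hlim k hk) (XM - X0)
      exact ⟨p, h0, fun _ => h1⟩
    · exact ⟨0, le_rfl, fun h => absurd h hk⟩
  choose p hp0 hp using hp
  set P := ∑ k ∈ Finset.Icc 1 M, p k with hPdef
  have hlow : ∀ y, inQ M X0 XM y → (∀ j, M ≤ j → y j = XM) → ∀ k ∈ Finset.Icc 1 M,
      r + Φ k (y k - y (k - 1)) - P ≤ J y := by
    intro y hy hyt k hk
    have h1 : r ≤ R y := hr (Set.mem_image_of_mem R (hQB y hy hyt))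
    have h2 : ∀ j ∈ Finset.Icc 1 M, 0 ≤ Φ j (y j - y (j - 1)) + p j := by
      intro j hj
      have hj' := Finset.mem_Icc.1 hj
      have a := hy.2.2 j hj'.1 hj'.2
      have b1 := (hQB y hy hyt j (Set.mem_univ _)).2
      have b2 := (hQB y hy hyt (j - 1) (Set.mem_univ _)).1
      have := hp j hj (y j - y (j - 1)) (by linarith) (by linarith)
      linarith
    have h3 := Finset.single_le_sum h2 hk
    rw [Finset.sum_add_distrib] at h3
    simp only [hJ]
    linarith [hp0 k]
  have hev : ∀ᶠ d in nhdsWithin (0:ℝ) (Set.Ioi 0), ∀ k ∈ Finset.Icc 1 M,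
      J x - r + P < Φ k d := by
    rw [Filter.eventually_all_finset]
    exact fun k hk => (hlim k hk).eventually_gt_atTop _
  rw [eventually_nhdsWithin_iff, Metric.eventually_nhds_iff] at hev
  obtain ⟨δ, hδ, hev⟩ := hev
  have hgap : ∀ y, inQ M X0 XM y → (∀ j, M ≤ j → y j = XM) → J y ≤ J x →
      ∀ k ∈ Finset.Icc 1 M, δ ≤ y k - y (k - 1) := by
    intro y hy hyt hle k hk
    by_contra! hlt
    have hk' := Finset.mem_Icc.1 hk
    have a := hy.2.2 k hk'.1 hk'.2
    have := hev (y := y k - y (k - 1))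
      (by rw [Real.dist_eq, sub_zero, abs_of_pos (by linarith)]; exact hlt)
      (Set.mem_Ioi.2 (by linarith)) k hk
    linarith [hlow y hy hyt k hk]
  set K : Set (ℕ → ℝ) := B ∩ ({y | y 0 = X0} ∩ ((⋂ j, {y | M ≤ j → y j = XM}) ∩
    ⋂ k, {y | k ∈ Finset.Icc 1 M → δ ≤ y k - y (k - 1)})) with hK
  have hKc : IsCompact K := by
    apply hBc.inter_right
    refine (isClosed_eq (by fun_prop) (by fun_prop)).inter (IsClosed.inter ?_ ?_)
    · refine isClosed_iInter fun j => ?_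
      by_cases hj : M ≤ j
      · simp only [hj, true_imp_iff]
        exact isClosed_eq (by fun_prop) (by fun_prop)
      · simp [hj]
    · refine isClosed_iInter fun k => ?_
      by_cases hk : k ∈ Finset.Icc 1 M
      · simp only [hk, true_imp_iff]
        exact isClosed_le (by fun_prop) (by fun_prop)
      · simp only [hk, false_imp_iff, Set.ofPred_true, isClosed_univ]
  have hKmem : ∀ y, inQ M X0 XM y → (∀ j, M ≤ j → y j = XM) → J y ≤ J x → y ∈ K := by
    intro y hy hyt hle
    refine ⟨hQB y hy hyt, hy.1, ?_, ?_⟩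
    · simpa using hyt
    · exact Set.mem_iInter.2 fun k => hgap y hy hyt hle k
  have hKgap : ∀ y ∈ K, ∀ k ∈ Finset.Icc 1 M, δ ≤ y k - y (k - 1) :=
    fun y hy k => Set.mem_iInter.1 hy.2.2.2 k
  have hJc : ContinuousOn J K := by
    apply hR.continuousOn.add
    apply continuousOn_finsetSum
    intro k hk
    refine (hc k hk).comp (Continuous.continuousOn (by fun_prop)) ?_
    intro y hy
    exact lt_of_lt_of_le hδ (hKgap y hy k hk)
  obtain ⟨z, hzK, hzmin⟩ := hKc.exists_isMinOn ⟨x, hKmem x hx hxt le_rfl⟩ hJc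
  have hzt : ∀ j, M ≤ j → z j = XM := fun j => Set.mem_iInter.1 hzK.2.2.1 j
  refine ⟨z, ⟨hzK.2.1, hzt M le_rfl, fun i h1 h2 => ?_⟩, hzt, fun y hy hyt => ?_⟩
  · linarith [hKgap z hzK i (Finset.mem_Icc.2 ⟨h1, h2⟩)]
  · by_cases hle : J y ≤ J x
    · exact hzmin (hKmem y hy hyt hle)
    · exact (hzmin (hKmem x hx hxt le_rfl)).trans (not_le.1 hle).le

/-- Euler–Lagrange equations at the minimizer. -/
lemma aux_EL (M : ℕ) (X0 XM : ℝ)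
    (g g' : ℕ → ℝ → ℝ) (hg : ∀ i t, HasDerivAt (g i) (g' i t) t)
    (W W' : ℝ → ℝ) (hW : ∀ t, HasDerivAt W (W' t) t) (hodd : ∀ t, W' (-t) = - W' t)
    (m : ℕ → ℝ)
    (Φ Φ' : ℕ → ℝ → ℝ)
    (hΦ : ∀ k ∈ Finset.Icc 1 M, ∀ d, 0 < d → HasDerivAt (Φ k) (Φ' k d) d)
    (hlim : ∀ k ∈ Finset.Icc 1 M, Tendsto (Φ k) (nhdsWithin 0 (Set.Ioi 0)) atTop)
    (x : ℕ → ℝ) (hx : inQ M X0 XM x) :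
    ∃ z : ℕ → ℝ, inQ M X0 XM z ∧ ∀ i, 1 ≤ i → i ≤ M - 1 →
      g' i (z i) + m i * ∑ j ∈ Finset.range (M + 1), m j * W' (z i - z j)
        + (Φ' i (z i - z (i - 1)) - Φ' (i + 1) (z (i + 1) - z i)) = 0 := by
  have hgc : ∀ i, Continuous (g i) := fun i =>
    continuous_iff_continuousAt.2 fun t => (hg i t).continuousAt
  have hWc : Continuous W := continuous_iff_continuousAt.2 fun t => (hW t).continuousAt
  set R : (ℕ → ℝ) → ℝ := fun z => ∑ i ∈ Finset.range (M + 1), g i (z i)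
    + ∑ i ∈ Finset.range (M + 1), ∑ j ∈ Finset.range (M + 1),
        1 / 2 * (m i * m j) * W (z i - z j) with hRdef
  have hR : Continuous R := by
    simp only [hRdef]
    fun_prop
  obtain ⟨z, hz, hzt, hmin⟩ := aux_min M X0 XM R hR Φ
    (fun k hk d hd => (hΦ k hk d hd).continuousAt.continuousWithinAt) hlim
    (fun j => if j ≤ M then x j else XM)
    ⟨by simpa using hx.1, by simpa using hx.2.1, fun i h1 h2 => by
      have := hx.2.2 i h1 h2
      simpa [h2, show i ≤ M + 1 by omega, show i - 1 ≤ M by omega] using this⟩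
    (fun j hj => by
      rcases hj.eq_or_lt with rfl | hj
      · simpa using hx.2.1
      · simp [not_le.2 hj])
  refine ⟨z, hz, fun i hi1 hiM => ?_⟩
  set e : ℕ → ℝ := fun j => if j = i then 1 else 0 with he
  set w : ℝ → ℕ → ℝ := fun t j => z j + t * e j with hw
  have hw0 : w 0 = z := by funext j; simp [hw]
  have hwd : ∀ j, HasDerivAt (fun t => w t j) (e j) 0 := by
    intro j
    simpa [hw] using ((hasDerivAt_id (0:ℝ)).mul_const (e j)).const_add (z j)
  have hevQ : ∀ᶠ t in nhds (0:ℝ), ∀ k ∈ Finset.Icc 1 M, w t (k - 1) < w t k := by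
    rw [Filter.eventually_all_finset]
    intro k hk
    have hk' := Finset.mem_Icc.1 hk
    apply (hwd (k - 1)).continuousAt.eventually_lt (hwd k).continuousAt
    simpa [hw] using hz.2.2 k hk'.1 hk'.2
  have hloc : IsLocalMin (fun t => R (w t) + ∑ k ∈ Finset.Icc 1 M, Φ k (w t k - w t (k - 1))) 0 := by
    filter_upwards [hevQ] with t ht
    rw [hw0]
    apply hmin
    · refine ⟨?_, ?_, fun k h1 h2 => ht k (Finset.mem_Icc.2 ⟨h1, h2⟩)⟩
      · simp [hw, he, hz.1, show 0 ≠ i by omega]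
      · simp [hw, he, hz.2.1, show M ≠ i by omega]
    · intro j hj
      simp [hw, he, hzt j hj, show j ≠ i by omega]
  have hd1 : HasDerivAt (fun t => ∑ j ∈ Finset.range (M + 1), g j (w t j))
      (∑ j ∈ Finset.range (M + 1), g' j (z j) * e j) 0 := by
    apply HasDerivAt.fun_sum
    intro j _
    exact HasDerivAt.comp (0:ℝ) (h₂ := g j) (by rw [hw0]; exact hg j (z j)) (hwd j)
  have hd2 : HasDerivAt (fun t => ∑ j ∈ Finset.range (M + 1), ∑ l ∈ Finset.range (M + 1),
        1 / 2 * (m j * m l) * W (w t j - w t l))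
      (∑ j ∈ Finset.range (M + 1), ∑ l ∈ Finset.range (M + 1),
        1 / 2 * (m j * m l) * (W' (z j - z l) * (e j - e l))) 0 := by
    apply HasDerivAt.fun_sum
    intro j _
    apply HasDerivAt.fun_sum
    intro l _
    apply HasDerivAt.const_mul
    exact HasDerivAt.comp (0:ℝ) (h₂ := W) (by rw [hw0]; exact hW _) ((hwd j).sub (hwd l))
  have hd3 : HasDerivAt (fun t => ∑ k ∈ Finset.Icc 1 M, Φ k (w t k - w t (k - 1)))
      (∑ k ∈ Finset.Icc 1 M, Φ' k (z k - z (k - 1)) * (e k - e (k - 1))) 0 := by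
    apply HasDerivAt.fun_sum
    intro k hk
    have hk' := Finset.mem_Icc.1 hk
    exact HasDerivAt.comp (0:ℝ) (h₂ := Φ k)
      (by rw [hw0]; exact hΦ k hk _ (sub_pos.2 (hz.2.2 k hk'.1 hk'.2))) ((hwd k).sub (hwd (k - 1)))
  have hzero := hloc.hasDerivAt_eq_zero ((hd1.add hd2).add hd3)
  have s1 : ∑ j ∈ Finset.range (M + 1), g' j (z j) * e j = g' i (z i) := by
    simp only [he, mul_ite, mul_one, mul_zero, Finset.sum_ite_eq', Finset.mem_range]
    rw [if_pos (by omega)]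
  have s2 : ∑ j ∈ Finset.range (M + 1), ∑ l ∈ Finset.range (M + 1),
        1 / 2 * (m j * m l) * (W' (z j - z l) * (e j - e l))
      = m i * ∑ j ∈ Finset.range (M + 1), m j * W' (z i - z j) := by
    have a1 : ∑ j ∈ Finset.range (M + 1), ∑ l ∈ Finset.range (M + 1),
        (1 / 2 * (m j * m l) * W' (z j - z l)) * e j
        = 1 / 2 * (m i * ∑ j ∈ Finset.range (M + 1), m j * W' (z i - z j)) := by
      simp_rw [← Finset.sum_mul]
      simp only [he, mul_ite, mul_one, mul_zero, Finset.sum_ite_eq', Finset.mem_range]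
      rw [if_pos (by omega), Finset.mul_sum, Finset.mul_sum]
      exact Finset.sum_congr rfl fun j _ => by ring
    have a2 : ∑ j ∈ Finset.range (M + 1), ∑ l ∈ Finset.range (M + 1),
        (1 / 2 * (m j * m l) * W' (z j - z l)) * e l
        = - (1 / 2 * (m i * ∑ j ∈ Finset.range (M + 1), m j * W' (z i - z j))) := by
      simp only [he, mul_ite, mul_one, mul_zero, Finset.sum_ite_eq', Finset.mem_range]
      simp only [if_pos (show i < M + 1 by omega)]
      rw [Finset.mul_sum, Finset.mul_sum, ← Finset.sum_neg_distrib]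
      refine Finset.sum_congr rfl fun j _ => ?_
      rw [← neg_sub (z i) (z j), hodd]; ring
    calc _ = ∑ j ∈ Finset.range (M + 1), ∑ l ∈ Finset.range (M + 1),
        (1 / 2 * (m j * m l) * W' (z j - z l)) * e j - ∑ j ∈ Finset.range (M + 1),
          ∑ l ∈ Finset.range (M + 1), (1 / 2 * (m j * m l) * W' (z j - z l)) * e l := by
          rw [← Finset.sum_sub_distrib]
          refine Finset.sum_congr rfl fun j _ => ?_
          rw [← Finset.sum_sub_distrib]
          exact Finset.sum_congr rfl fun l _ => by ring
      _ = _ := by rw [a1, a2]; ring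
  have s3 : ∑ k ∈ Finset.Icc 1 M, Φ' k (z k - z (k - 1)) * (e k - e (k - 1))
      = Φ' i (z i - z (i - 1)) - Φ' (i + 1) (z (i + 1) - z i) := by
    simp only [mul_sub, Finset.sum_sub_distrib]
    congr 1
    · simp only [he, mul_ite, mul_one, mul_zero, Finset.sum_ite_eq', Finset.mem_Icc]
      rw [if_pos (by omega)]
    · rw [Finset.sum_eq_single (i + 1)]
      · simp [he]
      · intro k hk hne
        have hk' := Finset.mem_Icc.1 hk
        simp [he, show k - 1 ≠ i by omega]
      · intro hk
        exact absurd (Finset.mem_Icc.2 ⟨by omega, by omega⟩) hk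
  rw [s1, s2, s3] at hzero
  exact hzero

/-- Expression of the node inner product as a weighted sum. -/
lemma aux_Shat (M : ℕ) (hM : 2 ≤ M) (h : ℝ) (K : ℝ → ℝ) (u0 x : ℕ → ℝ) (i : ℕ) :
    Shat M h K u0 x i = ∑ j ∈ Finset.range (M + 1),
      (h * u0 j * (if j = 0 ∨ j = M then 1 / 2 else 1)) * K (x i - x j) := by
  have e1 : Finset.Ioo 0 M = Finset.Ico 1 M := by ext; simp; omega
  rw [Finset.sum_range_succ, Finset.sum_range_eq_add_Ico _ (by omega)]
  unfold Shat ipE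
  rw [e1]
  have : ∑ j ∈ Finset.Ico 1 M,
      (h * u0 j * (if j = 0 ∨ j = M then 1 / 2 else 1)) * K (x i - x j)
      = h * ∑ j ∈ Finset.Ico 1 M, K (x i - x j) * u0 j := by
    rw [Finset.mul_sum]
    refine Finset.sum_congr rfl fun j hj => ?_
    have := Finset.mem_Ico.1 hj
    rw [if_neg (by omega)]; ring
  rw [this]
  simp only [true_or, or_true, if_true]
  ring

/-- **Theorem 4.1** (unique solvability of the fully discrete scheme in `Q`).
Assuming in addition that `H` is superlinear, for every `xⁿ ∈ Q` there is exactly one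
`x⁺ ∈ Q` (as an element of `ℝ^{M+1}`, i.e. up to the components `0, …, M`) that is a
scheme update of `xⁿ`. -/
theorem scheme_uniquely_solvable
    (M : ℕ) (hM : 2 ≤ M) (X0 XM : ℝ) (hX : X0 < XM)
    (h : ℝ) (hh : h = (XM - X0) / (M : ℝ)) (τ : ℝ) (hτ : 0 < τ)
    (H f Vc Ve Wc We : ℝ → ℝ)
    (hHconv : ConvexOn ℝ (Set.Ioi 0) H) (hHreg : ContDiffOn ℝ 1 H (Set.Ioi 0))
    (hf : ∀ s : ℝ, 0 < s → 0 < f s)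
    (hVcconv : ConvexOn ℝ Set.univ Vc) (hVcreg : ContDiff ℝ 1 Vc)
    (hVeconv : ConvexOn ℝ Set.univ Ve) (hVereg : ContDiff ℝ 1 Ve)
    (hWcconv : ConvexOn ℝ Set.univ Wc) (hWcreg : ContDiff ℝ 1 Wc)
    (hWeconv : ConvexOn ℝ Set.univ We) (hWereg : ContDiff ℝ 1 We)
    (hWceven : ∀ s : ℝ, Wc (-s) = Wc s) (hWeeven : ∀ s : ℝ, We (-s) = We s)
    (u0 u0half : ℕ → ℝ)
    (hu0 : ∀ i ≤ M, 0 < u0 i)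
    (hu0half : ∀ i, 1 ≤ i → i ≤ M → 0 < u0half i)
    (hHsup : Tendsto (fun s => H s / s) atTop atTop)
    (xn : ℕ → ℝ) (hxn : inQ M X0 XM xn) :
    ∃ xp : ℕ → ℝ,
      (inQ M X0 XM xp ∧ SchemeUpdate M h τ H f Vc Ve Wc We u0 u0half xn xp) ∧
      ∀ yp : ℕ → ℝ, inQ M X0 XM yp →
        SchemeUpdate M h τ H f Vc Ve Wc We u0 u0half xn yp →
        ∀ i ≤ M, yp i = xp i := by
  have hh0 : 0 < h := by
    rw [hh]; exact div_pos (by linarith) (by exact_mod_cast (by omega : 0 < M))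
  have hHd : ∀ s, 0 < s → HasDerivAt H (deriv H s) s := fun s hs =>
    ((hHreg.differentiableOn (by norm_num)).differentiableAt (Ioi_mem_nhds hs)).hasDerivAt
  have hc := aux_cCoef_pos M X0 XM h hh0 f hf u0 xn hu0 hxn
  have hle := fun x y => aux_le M X0 XM h hh0 τ hτ H f Vc Ve Wc We
    (fun s t hs hst => aux_pressure_mono H hHconv hHd hs hst)
    (aux_deriv_mono Vc hVcconv hVcreg) (aux_deriv_mono Wc hWcconv hWcreg)
    u0 u0half hu0 hu0half xn x y hc
  have hVd : ∀ t, HasDerivAt Vc (deriv Vc t) t := fun t =>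
    (hVcreg.differentiable (by norm_num) t).hasDerivAt
  have hWd : ∀ t, HasDerivAt Wc (deriv Wc t) t := fun t =>
    (hWcreg.differentiable (by norm_num) t).hasDerivAt
  have hodd : ∀ t, deriv Wc (-t) = - deriv Wc t := by
    intro t
    have h1 : HasDerivAt (fun s => Wc (-s)) (deriv Wc (-t) * (-1)) t :=
      (hWd (-t)).comp t (hasDerivAt_neg t)
    have h2 : (fun s => Wc (-s)) = Wc := funext hWceven
    rw [h2] at h1
    have := h1.unique (hWd t)
    linarith
  obtain ⟨z, hz, hEL⟩ := aux_EL M X0 XM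
    (fun i t => h * (cCoef M h f u0 xn i / τ * ((t - xn i) ^ 2 / 2) + u0 i * Vc t
      - (u0 i * deriv Ve (xn i) + u0 i * Shat M h (deriv We) u0 xn i) * t))
    (fun i t => h * (cCoef M h f u0 xn i / τ * (t - xn i) + u0 i * deriv Vc t
      - (u0 i * deriv Ve (xn i) + u0 i * Shat M h (deriv We) u0 xn i)))
    (fun i t => by
      have h1 : HasDerivAt (fun t : ℝ => (t - xn i) ^ 2 / 2) (t - xn i) t := by
        have := (((hasDerivAt_id t).sub_const (xn i)).pow 2).div_const 2
        refine this.congr_deriv ?_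
        simp
      have h2 : HasDerivAt (fun t : ℝ =>
          (u0 i * deriv Ve (xn i) + u0 i * Shat M h (deriv We) u0 xn i) * t)
          (u0 i * deriv Ve (xn i) + u0 i * Shat M h (deriv We) u0 xn i) t := by
        simpa using (hasDerivAt_id t).const_mul
          (u0 i * deriv Ve (xn i) + u0 i * Shat M h (deriv We) u0 xn i)
      exact (((h1.const_mul _).add ((hVd t).const_mul _)).sub h2).const_mul h)
    Wc (deriv Wc) hWd hodd
    (fun j => h * u0 j * (if j = 0 ∨ j = M then 1 / 2 else 1))
    (fun k d => d * H (u0half k * h / d))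
    (fun k d => H (u0half k * h / d) - u0half k * h / d * deriv H (u0half k * h / d))
    (fun k hk d hd => by
      have hk' := Finset.mem_Icc.1 hk
      have hu := hu0half k hk'.1 hk'.2
      have hs : 0 < u0half k * h / d := by positivity
      have h1 : HasDerivAt (fun d : ℝ => u0half k * h / d) (-(u0half k * h) / d ^ 2) d := by
        have := (hasDerivAt_const d (u0half k * h)).div (hasDerivAt_id d) hd.ne'
        refine this.congr_deriv ?_
        simp
      have h2 := (hasDerivAt_id d).mul ((hHd _ hs).comp d h1)
      refine h2.congr_deriv ?_
      simp only [id, Function.comp]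
      field_simp
      ring)
    (fun k hk => by
      have hk' := Finset.mem_Icc.1 hk
      have hu := hu0half k hk'.1 hk'.2
      have hs : 0 < u0half k * h := by positivity
      have h1 : Tendsto (fun d : ℝ => u0half k * h / d) (nhdsWithin 0 (Set.Ioi 0)) atTop := by
        simp only [div_eq_mul_inv]
        exact tendsto_inv_nhdsGT_zero.const_mul_atTop hs
      have h2 := (hHsup.comp h1).const_mul_atTop hs
      refine h2.congr' ?_
      filter_upwards [self_mem_nhdsWithin] with d hd
      have hd' : (0:ℝ) < d := hd
      simp only [Function.comp]
      field_simp)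
    xn hxn
  have hsz : SchemeUpdate M h τ H f Vc Ve Wc We u0 u0half xn z := by
    intro i hi1 hi2
    have key := hEL i hi1 hi2
    have hG : ∀ k, Gcell h H u0half z k
        = u0half k * h / (z k - z (k - 1)) * deriv H (u0half k * h / (z k - z (k - 1)))
          - H (u0half k * h / (z k - z (k - 1))) := by
      intro k
      unfold Gcell DhOp
      rw [div_div_eq_mul_div]
    have hS := aux_Shat M hM h (deriv Wc) u0 z i
    have hG1 := hG i
    have hG2 := hG (i + 1)
    simp only [Nat.add_sub_cancel] at hG2
    rw [← hS] at key
    simp only [if_neg (show ¬ (i = 0 ∨ i = M) by omega)] at key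
    have hdh : h * dhOp h (Gcell h H u0half z) i
        = Gcell h H u0half z (i + 1) - Gcell h H u0half z i := by
      unfold dhOp; field_simp
    have hfin : h * (cCoef M h f u0 xn i * (z i - xn i) / τ) =
      h * (-dhOp h (Gcell h H u0half z) i - u0 i * deriv Vc (z i)
        + u0 i * deriv Ve (xn i)
        - u0 i * Shat M h (deriv Wc) u0 z i + u0 i * Shat M h (deriv We) u0 xn i) := by
      have e1 : h * (cCoef M h f u0 xn i * (z i - xn i) / τ)
          = h * (cCoef M h f u0 xn i / τ * (z i - xn i)) := by ring
      rw [e1]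
      linarith
    exact mul_left_cancel₀ hh0.ne' hfin
  exact ⟨z, ⟨hz, hsz⟩, fun yp hyp hsy i hi =>
    le_antisymm (hle yp z hyp hz hsy hsz i hi) (hle z yp hz hyp hsz hsy i hi)⟩
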